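/- Fix an integer d ≥ 3 and a real p with 1/(d-1) < p < 1. For every b > 0 there exist δ, c, R > 0 such that: if 𝒢 is a regular (b,d)-expander on n vertices with girth exceeding R, then with probability at least 1 − exp(−c n), the random graph G ∼ 𝒢_p contains a simple path with at least δn edges. -/

import Mathlib

open scoped Classical symmDiff

noncomputable section

namespace Percolation

variable {V : Type} [Fintype V] [DecidableEq V]

/-- The edge set of `G` as a finset. -/
noncomputable def edgeFinset' (G : SimpleGraph V) : Finset (Sym2 V) :=
  Finset.univ.filter (· ∈ G.edgeSet)

/-- Probability that bond percolation on `G` with parameter `p` produces a spanning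
subgraph satisfying `P`. -/
noncomputable def percProb (G : SimpleGraph V) (p : ℝ) (P : SimpleGraph V → Prop) : ℝ :=
  ∑ s ∈ (edgeFinset' G).powerset,
    (p ^ s.card * (1 - p) ^ ((edgeFinset' G).card - s.card)) *
      (if P (SimpleGraph.fromEdgeSet (↑s)) then 1 else 0)

/-- Joint probability for two independent bond percolations on `G`. -/
noncomputable def percProb2 (G : SimpleGraph V) (p₁ p₂ : ℝ)
    (P : SimpleGraph V → SimpleGraph V → Prop) : ℝ :=
  ∑ s ∈ (edgeFinset' G).powerset, ∑ t ∈ (edgeFinset' G).powerset,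
    (p₁ ^ s.card * (1 - p₁) ^ ((edgeFinset' G).card - s.card)) *
    (p₂ ^ t.card * (1 - p₂) ^ ((edgeFinset' G).card - t.card)) *
      (if P (SimpleGraph.fromEdgeSet (↑s)) (SimpleGraph.fromEdgeSet (↑t)) then 1 else 0)

/-- Number of edges of `G` joining `S` to its complement. -/
noncomputable def cutCard (G : SimpleGraph V) (S : Finset V) : ℕ :=
  ((edgeFinset' G).filter (fun e => ∃ x ∈ S, ∃ y, y ∉ S ∧ e = s(x, y))).card

/-- `G` is a `(b,d)`-expander: max degree at most `d`, and every vertex set of size at most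
`n/2` has at least `b|S|` edges to its complement. -/
def IsExpander (G : SimpleGraph V) (b : ℝ) (d : ℕ) : Prop :=
  (∀ v, (G.neighborSet v).ncard ≤ d) ∧
  ∀ S : Finset V, (S.card : ℝ) ≤ Fintype.card V / 2 → b * S.card ≤ cutCard G S

/-- `G` is a regular `(b,d)`-expander. -/
def IsRegularExpander (G : SimpleGraph V) (b : ℝ) (d : ℕ) : Prop :=
  IsExpander G b d ∧ ∀ v, (G.neighborSet v).ncard = d

/-- The vertices of the connected component `c` of `G`. -/
noncomputable def compVerts (G : SimpleGraph V) (c : G.ConnectedComponent) : Finset V :=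
  Finset.univ.filter (fun v => G.connectedComponentMk v = c)

/-- The edges of the connected component `c` of `G`. -/
noncomputable def compEdges (G : SimpleGraph V) (c : G.ConnectedComponent) : Finset (Sym2 V) :=
  (edgeFinset' G).filter (fun e => ∀ v ∈ e, G.connectedComponentMk v = c)

/-- `c` is a largest connected component of `G`. -/
def IsLargestComp (G : SimpleGraph V) (c : G.ConnectedComponent) : Prop :=
  ∀ c' : G.ConnectedComponent, (compVerts G c').card ≤ (compVerts G c).card

/-- The 2-core of the connected component `c` of `G` : the maximal subgraph of `G`
supported inside `c` all of whose vertices have degree at least 2. -/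
noncomputable def twoCoreComp (G : SimpleGraph V) (c : G.ConnectedComponent) : SimpleGraph V :=
  sSup {H : SimpleGraph V | H ≤ G ∧ (∀ v ∈ H.support, G.connectedComponentMk v = c) ∧
    ∀ v ∈ H.support, 2 ≤ (H.neighborSet v).ncard}

/-- The event `A^R_{x,y}(H)`: the connected component of `y` in `H` with the edge `xy`
removed (if present) has at least `R` vertices. -/
def eventA (H : SimpleGraph V) (R : ℕ) (x y : V) : Prop :=
  R ≤ (compVerts (H.deleteEdges {s(x, y)})
        ((H.deleteEdges {s(x, y)}).connectedComponentMk y)).card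

/-- `E₁(H)`: edges `xy` of `H` such that `A^R_{x,y}` or `A^R_{y,x}` holds. -/
noncomputable def E1set (H : SimpleGraph V) (R : ℕ) : Finset (Sym2 V) :=
  (edgeFinset' H).filter (fun e => ∃ x y, e = s(x, y) ∧ (eventA H R x y ∨ eventA H R y x))

/-- `V₁(H)`: vertices `x` such that for some `y`, `xy ∈ E(H)` and `A^R_{x,y}` holds. -/
noncomputable def V1set (H : SimpleGraph V) (R : ℕ) : Finset V :=
  Finset.univ.filter (fun x => ∃ y, H.Adj x y ∧ eventA H R x y)

/-- `E₂(H)`: edges `xy` of `H` such that both `A^R_{x,y}` and `A^R_{y,x}` hold. -/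
noncomputable def E2set (H : SimpleGraph V) (R : ℕ) : Finset (Sym2 V) :=
  (edgeFinset' H).filter (fun e => ∃ x y, e = s(x, y) ∧ eventA H R x y ∧ eventA H R y x)

/-- `V₂(H)`: vertices incident to an edge of `E₂(H)`. -/
noncomputable def V2set (H : SimpleGraph V) (R : ℕ) : Finset V :=
  Finset.univ.filter (fun x => ∃ e ∈ E2set H R, x ∈ e)

/-- `V̄₁(H)`: vertices `y` such that `A^R_{x,y}(H)` holds for some `x`. -/
noncomputable def Vbar1 (H : SimpleGraph V) (R : ℕ) : Finset V :=
  Finset.univ.filter (fun y => ∃ x, eventA H R x y)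

/-- `S` is `k`-thick in `H`: a union of pairwise disjoint subsets, each of size at least
`k`, each inducing a connected subgraph of `H`. -/
def IsThick (H : SimpleGraph V) (k : ℕ) (S : Finset V) : Prop :=
  ∃ P : Finset (Finset V),
    (∀ T ∈ P, k ≤ T.card ∧ (H.induce (↑T : Set V)).Connected) ∧
    (↑P : Set (Finset V)).PairwiseDisjoint id ∧ S = P.biUnion id

/-- `S` is a separator of `K`. -/
def IsSeparator {W : Type} [Fintype W] (K : SimpleGraph W) (S : Finset W) : Prop :=
  ∃ A B : Finset W, Disjoint A B ∧ Disjoint A S ∧ Disjoint B S ∧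
    (∀ w, w ∈ A ∨ w ∈ B ∨ w ∈ S) ∧
    (∀ a ∈ A, ∀ b ∈ B, ¬ K.Adj a b) ∧
    3 * A.card ≤ 2 * Fintype.card W ∧ 3 * B.card ≤ 2 * Fintype.card W

/-! Expose the percolation in two rounds, of parameters `p₁ ∈ (1 / (d - 1), p)` and `p₂`, where
`1 - p = (1 - p₁) * (1 - p₂)`.

In the first round, explore the cluster of a vertex edge by edge. Below the girth, each boundary
edge of the explored set leads to a different new vertex, so the exploration dominates a
supercritical branching process and reaches any constant size `K` with probability bounded
below, uniformly in `K`. As one edge changes the number of vertices in clusters of size at least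
`K` by at most `2 * K`, this number is linear in `n` outside an event of exponentially small
probability.

If a graph has no path of linear length, depth-first search yields a small set `U` of vertices
whose removal leaves the big clusters split into two large parts with no connection between them.
There are at most `n / K` big clusters, hence at most `2 ^ (n / K)` such splittings, and the choices
of `U` are few as well. For each of them, the expansion of `G` provides linearly many edge-disjoint
paths of bounded length that join the two parts and avoid `U`, and the second round misses all of
them with probability at most a constant times `exp (-κ * n)`, where `κ` does not depend on `K`.
A union bound concludes for `K` large. -/

open MeasureTheory ProbabilityTheory in
lemma two_point_exp_le {p : ℝ} (hp : p ∈ Set.Icc 0 1) (x y : ℝ) :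
    p * Real.exp x + (1 - p) * Real.exp y ≤
      Real.exp (p * x + (1 - p) * y + (x - y) ^ 2 / 8) := by
  set μ : Measure ℝ := ENNReal.ofReal p • .dirac x + ENNReal.ofReal (1 - p) • .dirac y
  have hq : 0 ≤ 1 - p := sub_nonneg.2 hp.2
  have integral_μ (f : ℝ → ℝ) : ∫ z, f z ∂μ = p * f x + (1 - p) * f y := by
    rw [integral_add_measure, integral_smul_measure, integral_smul_measure, integral_dirac,
      integral_dirac, ENNReal.toReal_ofReal hp.1, ENNReal.toReal_ofReal hq, smul_eq_mul,
      smul_eq_mul]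
    all_goals exact (integrable_dirac (by simp)).smul_measure ENNReal.ofReal_ne_top
  have : IsProbabilityMeasure μ := ⟨by simp [μ, ← ENNReal.ofReal_add hp.1 hq]⟩
  have mem_Icc : ∀ᵐ z ∂μ, id z ∈ Set.Icc (min x y) (max x y) := by
    rw [ae_add_measure_iff]
    constructor <;> refine Measure.ae_smul_measure ?_ _ <;> simp [ae_dirac_eq]
  have hoeffding := (hasSubgaussianMGF_of_mem_Icc aemeasurable_id mem_Icc).mgf_le 1
  rw [mgf, integral_μ, integral_μ] at hoeffding
  simp only [id, one_mul, Real.exp_sub, ← mul_div_assoc, ← add_div] at hoeffding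
  rw [div_le_iff₀ (Real.exp_pos _), ← Real.exp_add] at hoeffding
  refine hoeffding.trans_eq ?_
  simp only [max_sub_min_eq_abs, NNReal.coe_pow, NNReal.coe_div, coe_nnnorm, NNReal.coe_ofNat,
    Real.norm_eq_abs, abs_abs, div_pow, sq_abs]
  ring_nf

section RandomSubset

variable {α : Type*} {p : ℝ}

/-- The expectation of `f s` when `s` is the random subset of `E` that keeps each element
independently with probability `p`. -/
def subsetExp (E : Finset α) (p : ℝ) (f : Finset α → ℝ) : ℝ :=
  ∑ s ∈ E.powerset, (p ^ s.card * (1 - p) ^ (E.card - s.card)) * f s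

/-- The probability that the random subset of `E` that keeps each element independently with
probability `p` satisfies `P`. -/
def subsetProb (E : Finset α) (p : ℝ) (P : Finset α → Prop) : ℝ :=
  subsetExp E p fun s => if P s then 1 else 0

lemma subsetExp_empty (f : Finset α → ℝ) : subsetExp ∅ p f = f ∅ := by
  simp [subsetExp]

lemma subsetExp_mono (hp : p ∈ Set.Icc 0 1) {E : Finset α} {f g : Finset α → ℝ}
    (h : ∀ s ⊆ E, f s ≤ g s) : subsetExp E p f ≤ subsetExp E p g := by
  have hp0 := hp.1
  have hq : 0 ≤ 1 - p := sub_nonneg.2 hp.2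
  exact Finset.sum_le_sum fun s hs =>
    mul_le_mul_of_nonneg_left (h s (Finset.mem_powerset.1 hs)) (by positivity)

lemma subsetExp_add (E : Finset α) (f g : Finset α → ℝ) :
    subsetExp E p (fun s => f s + g s) = subsetExp E p f + subsetExp E p g := by
  simp [subsetExp, mul_add, Finset.sum_add_distrib]

lemma subsetExp_const_mul (E : Finset α) (c : ℝ) (f : Finset α → ℝ) :
    subsetExp E p (fun s => c * f s) = c * subsetExp E p f := by
  simp only [subsetExp, Finset.mul_sum, mul_left_comm c]

lemma subsetExp_sum {ι : Type*} (I : Finset ι) (E : Finset α) (f : ι → Finset α → ℝ) :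
    subsetExp E p (fun s => ∑ i ∈ I, f i s) = ∑ i ∈ I, subsetExp E p (f i) := by
  simp only [subsetExp, Finset.mul_sum]
  exact Finset.sum_comm

lemma subsetExp_const (E : Finset α) (c : ℝ) : subsetExp E p (fun _ => c) = c := by
  rw [subsetExp, ← Finset.sum_mul, Finset.sum_pow_mul_eq_add_pow, add_sub_cancel, one_pow, one_mul]

lemma abs_subsetExp_sub_le (hp : p ∈ Set.Icc 0 1) {E : Finset α} {f g : Finset α → ℝ} {c : ℝ}
    (h : ∀ s ⊆ E, |f s - g s| ≤ c) : |subsetExp E p f - subsetExp E p g| ≤ c := by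
  have upper : subsetExp E p f ≤ subsetExp E p fun s => g s + c :=
    subsetExp_mono hp fun s hs => by linarith [(abs_le.1 (h s hs)).2]
  have lower : subsetExp E p (fun s => g s + -c) ≤ subsetExp E p f :=
    subsetExp_mono hp fun s hs => by linarith [(abs_le.1 (h s hs)).1]
  rw [subsetExp_add, subsetExp_const] at upper lower
  exact abs_le.2 ⟨by linarith, by linarith⟩

lemma subsetProb_mono (hp : p ∈ Set.Icc 0 1) {E : Finset α} {P Q : Finset α → Prop}
    (h : ∀ s ⊆ E, P s → Q s) : subsetProb E p P ≤ subsetProb E p Q :=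
  subsetExp_mono hp fun s hs => by
    by_cases hP : P s
    · simp [hP, h s hs hP]
    · rw [if_neg hP]
      split_ifs <;> norm_num

lemma subsetProb_le_one (hp : p ∈ Set.Icc 0 1) (E : Finset α) (P : Finset α → Prop) :
    subsetProb E p P ≤ 1 :=
  (subsetExp_mono hp fun s _ => by split_ifs <;> norm_num).trans_eq (subsetExp_const E 1)

lemma subsetProb_compl (E : Finset α) (P : Finset α → Prop) :
    subsetProb E p (fun s => ¬ P s) = 1 - subsetProb E p P := by
  rw [eq_sub_iff_add_eq, subsetProb, subsetProb, ← subsetExp_add]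
  convert subsetExp_const E 1 using 3 with s
  by_cases P s <;> simp [*]

lemma subsetProb_eq_self (E : Finset α) : subsetProb E p (· = E) = p ^ E.card := by
  simp [subsetProb, subsetExp]

lemma subsetProb_le_card_mul (hp : p ∈ Set.Icc 0 1) {ι : Type*} {I : Finset ι} {E : Finset α}
    {P : Finset α → Prop} {Q : ι → Finset α → Prop} {B : ℝ}
    (hPQ : ∀ s ⊆ E, P s → ∃ i ∈ I, Q i s) (hB : ∀ i ∈ I, subsetProb E p (Q i) ≤ B) :
    subsetProb E p P ≤ I.card * B := by
  calc subsetProb E p P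
      ≤ subsetExp E p fun s => ∑ i ∈ I, if Q i s then 1 else 0 := by
        refine subsetExp_mono hp fun s hs => ?_
        have indicator_nonneg : ∀ i ∈ I, (0 : ℝ) ≤ if Q i s then 1 else 0 := fun i _ => by
          split_ifs <;> norm_num
        split_ifs with hP
        · obtain ⟨i, hi, hQ⟩ := hPQ s hs hP
          simpa [hQ] using Finset.single_le_sum indicator_nonneg hi
        · exact Finset.sum_nonneg indicator_nonneg
    _ = ∑ i ∈ I, subsetProb E p (Q i) := subsetExp_sum I E _
    _ ≤ I.card * B := by simpa using Finset.sum_le_card_nsmul I _ B hB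

variable [DecidableEq α]

lemma subsetExp_insert {e : α} {E : Finset α} (he : e ∉ E) (f : Finset α → ℝ) :
    subsetExp (insert e E) p f =
      p * subsetExp E p (fun s => f (insert e s)) + (1 - p) * subsetExp E p f := by
  unfold subsetExp
  rw [Finset.sum_powerset_insert he, add_comm, Finset.mul_sum, Finset.mul_sum]
  congr 1
  · refine Finset.sum_congr rfl fun t ht => ?_
    have het : e ∉ t := fun h => he (Finset.mem_powerset.1 ht h)
    rw [Finset.card_insert_of_notMem het, Finset.card_insert_of_notMem he, Nat.add_sub_add_right]
    ring
  · refine Finset.sum_congr rfl fun t ht => ?_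
    have hc := Finset.card_le_card (Finset.mem_powerset.1 ht)
    rw [Finset.card_insert_of_notMem he, Nat.sub_add_comm hc]
    ring

lemma subsetExp_union {A B : Finset α} (h : Disjoint A B) (f : Finset α → ℝ) :
    subsetExp (A ∪ B) p f = subsetExp A p fun s => subsetExp B p fun t => f (s ∪ t) := by
  induction A using Finset.induction_on generalizing f with
  | empty => simp [subsetExp_empty]
  | insert e A he ih =>
    rw [Finset.disjoint_insert_left] at h
    rw [Finset.insert_union, subsetExp_insert (by simp [he, h.1]), subsetExp_insert he,
      ih h.2, ih h.2]
    simp only [Finset.insert_union]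

lemma subsetExp_sprinkle (E : Finset α) {p₁ p₂ : ℝ} (h : 1 - p = (1 - p₁) * (1 - p₂))
    (f : Finset α → ℝ) :
    subsetExp E p f = subsetExp E p₁ fun s => subsetExp E p₂ fun t => f (s ∪ t) := by
  induction E using Finset.induction_on generalizing f with
  | empty => simp [subsetExp_empty]
  | insert e E he ih =>
    simp only [subsetExp_insert he, Finset.insert_union, Finset.union_insert, Finset.insert_idem,
      subsetExp_add, subsetExp_const_mul]
    rw [ih f, ih (fun s => f (insert e s)), h]
    obtain rfl : p = 1 - (1 - p₁) * (1 - p₂) := by linarith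
    ring

lemma subsetProb_sprinkle_le {p₁ p₂ : ℝ} (hp₁ : p₁ ∈ Set.Icc 0 1) (hp₂ : p₂ ∈ Set.Icc 0 1)
    (h : 1 - p = (1 - p₁) * (1 - p₂)) {E : Finset α} {P Q : Finset α → Prop} {B : ℝ}
    (hB : 0 ≤ B) (hPQ : ∀ s ⊆ E, Q s → subsetProb E p₂ (fun t => P (s ∪ t)) ≤ B) :
    subsetProb E p P ≤ subsetProb E p₁ (fun s => ¬ Q s) + B := by
  calc subsetProb E p P
      = subsetExp E p₁ fun s => subsetProb E p₂ fun t => P (s ∪ t) := subsetExp_sprinkle E h _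
    _ ≤ subsetExp E p₁ fun s => (if ¬ Q s then 1 else 0) + B := by
        refine subsetExp_mono hp₁ fun s hs => ?_
        by_cases hQ : Q s
        · simpa [hQ] using hPQ s hs hQ
        · simpa [hQ] using (subsetProb_le_one hp₂ E _).trans (le_add_of_nonneg_right hB)
    _ = subsetProb E p₁ (fun s => ¬ Q s) + B := by
        rw [subsetExp_add, subsetExp_const, subsetProb]
        congr!

section ManyWitnesses

variable {E : Finset α} {P : Finset α → Prop} {ℓ : ℕ}

lemma subsetProb_not_le_pow (hp : p ∈ Set.Icc 0 1) (hP : Monotone P) (m : ℕ)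
    (h : ∀ D : Finset α, D.card ≤ m * ℓ → ∃ Q ⊆ E \ D, Q.card ≤ ℓ ∧ P Q) :
    subsetProb E p (fun s => ¬ P s) ≤ (1 - p ^ ℓ) ^ m := by
  have hpℓ : 0 ≤ 1 - p ^ ℓ := sub_nonneg.2 (pow_le_one₀ hp.1 hp.2)
  induction m generalizing E with
  | zero => simpa using subsetProb_le_one hp E _
  | succ m ih =>
    obtain ⟨Q, hQE, hQℓ, hPQ⟩ := h ∅ (by simp)
    rw [Finset.sdiff_empty] at hQE
    have outside_Q : subsetProb (E \ Q) p (fun t => ¬ P t) ≤ (1 - p ^ ℓ) ^ m := ih fun D hD => by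
      obtain ⟨Q', hQ', hcard, hPQ'⟩ := h (Q ∪ D) (by grind [Finset.card_union_le Q D])
      exact ⟨Q', by rwa [sdiff_sdiff_left], hcard, hPQ'⟩
    calc subsetProb E p (fun s => ¬ P s)
        = subsetExp Q p fun s => subsetProb (E \ Q) p fun t => ¬ P (s ∪ t) := by
          rw [subsetProb, ← Finset.union_sdiff_of_subset hQE, subsetExp_union Finset.disjoint_sdiff,
            Finset.union_sdiff_of_subset hQE]
          rfl
      _ ≤ subsetExp Q p fun s => (1 - p ^ ℓ) ^ m * if s ≠ Q then 1 else 0 := by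
          refine subsetExp_mono hp fun s _ => ?_
          by_cases hs : s = Q
          · have (t : Finset α) : P (s ∪ t) := hP (hs ▸ Finset.subset_union_left) hPQ
            simp [hs ▸ this, hs, subsetProb, subsetExp_const]
          · rw [if_pos hs, mul_one]
            exact (subsetProb_mono hp fun t _ =>
              mt (@hP t (s ∪ t) Finset.subset_union_right)).trans outside_Q
      _ = (1 - p ^ ℓ) ^ m * (1 - p ^ Q.card) := by
          rw [subsetExp_const_mul, ← subsetProb_eq_self Q, ← subsetProb_compl]
          simp only [subsetProb, ne_eq]
          congr!
      _ ≤ (1 - p ^ ℓ) ^ (m + 1) := by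
          rw [pow_succ]
          gcongr _ * (1 - ?_)
          exact pow_le_pow_of_le_one hp.1 hp.2 hQℓ

lemma subsetProb_not_le_exp (hp : p ∈ Set.Icc 0 1) (hP : Monotone P) {M : ℝ} (hM : 0 ≤ M)
    (h : ∀ D : Finset α, D.card ≤ M → ∃ Q ⊆ E \ D, Q.card ≤ ℓ ∧ P Q) :
    subsetProb E p (fun s => ¬ P s) ≤ Real.exp (1 - p ^ ℓ * (M / ℓ)) := by
  have hpℓ0 : 0 ≤ p ^ ℓ := pow_nonneg hp.1 ℓ
  have hpℓ1 : p ^ ℓ ≤ 1 := pow_le_one₀ hp.1 hp.2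
  set m := ⌊M / ℓ⌋₊
  have hm : M / ℓ < m + 1 := Nat.lt_floor_add_one _
  have hmM : ((m * ℓ : ℕ) : ℝ) ≤ M := by
    rw [Nat.cast_mul]
    exact mul_le_of_le_div₀ hM ℓ.cast_nonneg (Nat.floor_le (by positivity))
  calc subsetProb E p (fun s => ¬ P s)
      ≤ (1 - p ^ ℓ) ^ m := subsetProb_not_le_pow hp hP m fun D hD =>
        h D ((Nat.cast_le.2 hD).trans hmM)
    _ ≤ Real.exp (-p ^ ℓ) ^ m := by
        gcongr
        linarith [Real.add_one_le_exp (-p ^ ℓ)]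
    _ = Real.exp (-(p ^ ℓ * m)) := by rw [← Real.exp_nat_mul]; ring_nf
    _ ≤ Real.exp (1 - p ^ ℓ * (M / ℓ)) := by
        gcongr
        nlinarith

end ManyWitnesses

section BoundedDifferences

variable {E : Finset α} {f : Finset α → ℝ} {c : ℝ}

lemma subsetExp_exp_le (hp : p ∈ Set.Icc 0 1)
    (hf : ∀ e ∈ E, ∀ s ⊆ E, |f (insert e s) - f s| ≤ c) (τ : ℝ) :
    subsetExp E p (fun s => Real.exp (τ * f s)) ≤
      Real.exp (τ * subsetExp E p f + E.card * ((τ * c) ^ 2 / 8)) := by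
  have hq : 0 ≤ 1 - p := sub_nonneg.2 hp.2
  induction E using Finset.induction_on generalizing f with
  | empty => simp [subsetExp_empty]
  | insert e E he ih =>
    have hE : E ⊆ insert e E := Finset.subset_insert e E
    have with_e := ih (f := fun s => f (insert e s)) fun e' he' s hs => by
      rw [Finset.insert_comm]
      exact hf e' (hE he') (insert e s) (Finset.insert_subset_insert e hs)
    have without_e := ih (f := f) fun e' he' s hs => hf e' (hE he') s (hs.trans hE)
    set μ₁ := subsetExp E p fun s => f (insert e s)
    set μ₀ := subsetExp E p f
    have means_close : |μ₁ - μ₀| ≤ c := abs_subsetExp_sub_le hp fun s hs =>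
      hf e (Finset.mem_insert_self e E) s (hs.trans hE)
    set v := (τ * c) ^ 2 / 8
    have variance_le : (τ * μ₁ - τ * μ₀) ^ 2 / 8 ≤ v := by
      refine div_le_div_of_nonneg_right ?_ (by norm_num)
      rw [← mul_sub, mul_pow, mul_pow]
      exact mul_le_mul_of_nonneg_left (sq_le_sq.2 (means_close.trans (le_abs_self c)))
        (sq_nonneg τ)
    calc subsetExp (insert e E) p (fun s => Real.exp (τ * f s))
        ≤ p * Real.exp (τ * μ₁ + E.card * v) + (1 - p) * Real.exp (τ * μ₀ + E.card * v) := by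
          rw [subsetExp_insert he]
          exact add_le_add (mul_le_mul_of_nonneg_left with_e hp.1)
            (mul_le_mul_of_nonneg_left without_e hq)
      _ = (p * Real.exp (τ * μ₁) + (1 - p) * Real.exp (τ * μ₀)) * Real.exp (E.card * v) := by
          rw [Real.exp_add, Real.exp_add]
          ring
      _ ≤ Real.exp (p * (τ * μ₁) + (1 - p) * (τ * μ₀) + v) * Real.exp (E.card * v) := by
          gcongr
          exact (two_point_exp_le hp _ _).trans (Real.exp_le_exp.2 (by linarith))
      _ = Real.exp (τ * subsetExp (insert e E) p f + (insert e E).card * v) := by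
          rw [← Real.exp_add, subsetExp_insert he, Finset.card_insert_of_notMem he, Nat.cast_succ]
          congr 1
          ring

lemma subsetProb_le_subsetExp_sub (hp : p ∈ Set.Icc 0 1)
    (hf : ∀ e ∈ E, ∀ s ⊆ E, |f (insert e s) - f s| ≤ c) {a : ℝ} (ha : 0 ≤ a) :
    subsetProb E p (fun s => f s ≤ subsetExp E p f - a) ≤
      Real.exp (-(2 * a ^ 2 / (E.card * c ^ 2))) := by
  by_cases hv : E.card * c ^ 2 = 0
  · simpa [hv] using subsetProb_le_one hp E _
  set μ := subsetExp E p f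
  -- The optimal parameter in the Chernoff bound.
  set τ := 4 * a / (E.card * c ^ 2)
  have hτ : 0 ≤ τ := by positivity
  calc subsetProb E p (fun s => f s ≤ μ - a)
      ≤ subsetExp E p fun s => Real.exp (τ * (μ - a)) * Real.exp (-τ * f s) := by
        refine subsetExp_mono hp fun s _ => ?_
        rw [← Real.exp_add]
        split_ifs with hs
        · exact Real.one_le_exp (by nlinarith)
        · positivity
    _ ≤ Real.exp (τ * (μ - a)) * Real.exp (-τ * μ + E.card * ((-τ * c) ^ 2 / 8)) := by
        rw [subsetExp_const_mul]
        gcongr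
        exact subsetExp_exp_le hp hf (-τ)
    _ = Real.exp (-(2 * a ^ 2 / (E.card * c ^ 2))) := by
        rw [← Real.exp_add]
        congr 1
        obtain ⟨hE, hc⟩ : (E.card : ℝ) ≠ 0 ∧ c ≠ 0 := by simpa using hv
        simp only [τ]
        field_simp
        ring

end BoundedDifferences

end RandomSubset

section DepthFirstSearch

variable {V : Type*} {H : SimpleGraph V} {S : Finset V} {l : List V}

/-- `H` contains a simple path with at least `ℓ` edges. The length is a real number, so that it can
be a proportion of the number of vertices. -/
def HasPath (H : SimpleGraph V) (ℓ : ℝ) : Prop :=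
  ∃ (u w : V) (P : H.Walk u w), P.IsPath ∧ ℓ ≤ P.length

lemma length_le_of_not_hasPath {ℓ : ℝ} (hℓ : 0 ≤ ℓ) (hH : ¬ HasPath H ℓ) (hnodup : l.Nodup)
    (hchain : l.IsChain H.Adj) : l.length ≤ ℓ + 1 := by
  by_cases hl : l = []
  · simpa [hl] using hℓ.trans (by linarith)
  set P := SimpleGraph.Walk.ofSupport l hl hchain
  have support_P : P.support = l := SimpleGraph.Walk.support_ofSupport hl hchain
  have length_P : l.length = P.length + 1 := by rw [← P.length_support, support_P]
  have short : P.length < ℓ := not_le.1 fun h =>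
    hH ⟨_, _, P, .mk' (by rwa [support_P]), h⟩
  rw [length_P]
  push_cast
  linarith

/-- A state of depth-first search in `H`: the vertices of `S` are finished, and the stack `l`, with
its top first, is a path. The remaining vertices are yet to be visited. -/
structure IsDFSState (H : SimpleGraph V) (S : Finset V) (l : List V) : Prop where
  nodup : l.Nodup
  isChain : l.IsChain H.Adj
  notMem : ∀ x ∈ l, x ∉ S
  mem_of_adj : ∀ x ∈ S, ∀ y, H.Adj x y → y ∈ S ∨ y ∈ l

namespace IsDFSState

lemma push {t : V} (h : IsDFSState H S l) (htS : t ∉ S) (htl : t ∉ l)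
    (hchain : (t :: l).IsChain H.Adj) : IsDFSState H S (t :: l) where
  nodup := List.nodup_cons.2 ⟨htl, h.nodup⟩
  isChain := hchain
  notMem := by simpa [htS] using h.notMem
  mem_of_adj x hx y hxy := (h.mem_of_adj x hx y hxy).imp_right (List.mem_cons_of_mem t)

variable [DecidableEq V]

lemma pop {t : V} (h : IsDFSState H S (t :: l))
    (hfinished : ∀ y, H.Adj t y → y ∈ S ∨ y ∈ t :: l) : IsDFSState H (insert t S) l where
  nodup := (List.nodup_cons.1 h.nodup).2
  isChain := h.isChain.of_cons
  notMem x hx := by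
    have := h.notMem x (List.mem_cons_of_mem t hx)
    have := (List.nodup_cons.1 h.nodup).1
    grind
  mem_of_adj x hx y hxy := by
    have := h.mem_of_adj x
    grind

/-- Each step moves one vertex `t` on: from unvisited to the stack, or from the stack to `S`. -/
lemma exists_step (h : IsDFSState H S l) (hS : ∃ t, t ∉ S) :
    ∃ S' l' t, IsDFSState H S' l' ∧ ∀ T : Finset V,
      2 * (S' ∩ T).card + (l'.toFinset ∩ T).card =
        2 * (S ∩ T).card + (l.toFinset ∩ T).card + ({t} ∩ T).card := by
  have card_insert_inter {t : V} {X : Finset V} (ht : t ∉ X) (T : Finset V) :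
      (insert t X ∩ T).card = (X ∩ T).card + ({t} ∩ T).card := by
    grind
  have card_push_inter {t : V} (htl : t ∉ l) (T : Finset V) :
      2 * (S ∩ T).card + ((t :: l).toFinset ∩ T).card =
        2 * (S ∩ T).card + (l.toFinset ∩ T).card + ({t} ∩ T).card := by
    rw [List.toFinset_cons, card_insert_inter (by simpa using htl), add_assoc]
  cases l with
  | nil =>
    obtain ⟨t, ht⟩ := hS
    have htl : t ∉ [] := List.not_mem_nil
    exact ⟨S, [t], t, h.push ht htl (.singleton t), card_push_inter htl⟩
  | cons a l =>
    by_cases hfinished : ∀ y, H.Adj a y → y ∈ S ∨ y ∈ a :: l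
    · refine ⟨insert a S, l, a, h.pop hfinished, fun T => ?_⟩
      have haS : a ∉ S := h.notMem a List.mem_cons_self
      have hal : a ∉ l.toFinset := by simpa using (List.nodup_cons.1 h.nodup).1
      rw [List.toFinset_cons, card_insert_inter haS, card_insert_inter hal]
      ring
    · push Not at hfinished
      obtain ⟨y, hay, hyS, hyl⟩ := hfinished
      exact ⟨S, y :: a :: l, y, h.push hyS hyl (h.isChain.cons_cons hay.symm), card_push_inter hyl⟩

lemma exists_balanced [Finite V] (H : SimpleGraph V) (W : Finset V) :
    ∃ S l, IsDFSState H S l ∧ 2 * (S ∩ W).card + (l.toFinset ∩ W).card = W.card := by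
  have := Fintype.ofFinite V
  by_contra! unbalanced
  have run_forever (k : ℕ) : ∃ S l, IsDFSState H S l ∧
      2 * (S ∩ W).card + (l.toFinset ∩ W).card < W.card ∧ k ≤ 2 * S.card + l.toFinset.card := by
    induction k with
    | zero =>
      have init : IsDFSState H ∅ [] := ⟨by simp, by simp, by simp, by simp⟩
      exact ⟨∅, [], init, lt_of_le_of_ne (by simp) (unbalanced ∅ [] init), by simp⟩
    | succ k ih =>
      obtain ⟨S, l, h, hW, hk⟩ := ih
      have hS : ∃ t, t ∉ S := by
        by_contra! hS
        rw [Finset.inter_eq_right.2 fun t _ => hS t] at hW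
        lia
      obtain ⟨S', l', t, h', hstep⟩ := h.exists_step hS
      have hWt : ({t} ∩ W).card ≤ 1 := Finset.card_le_card Finset.inter_subset_left
      have hW' := hstep W
      have hk' := hstep Finset.univ
      simp only [Finset.inter_univ, Finset.card_singleton] at hk'
      exact ⟨S', l', h', lt_of_le_of_ne (by lia) (unbalanced S' l' h'), by lia⟩
  obtain ⟨S, l, -, -, hk⟩ := run_forever (3 * Fintype.card V + 1)
  have := S.card_le_univ
  have := l.toFinset.card_le_univ
  lia

end IsDFSState

lemma exists_balanced_cut_of_not_hasPath [Finite V] [DecidableEq V] {ℓ : ℝ} (hℓ : 0 ≤ ℓ)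
    (hH : ¬ HasPath H ℓ) (W : Finset V) :
    ∃ S U : Finset V, Disjoint S U ∧ U.card ≤ ℓ + 1 ∧
      (∀ x ∈ S, ∀ y, H.Adj x y → y ∈ S ∨ y ∈ U) ∧
      2 * (S ∩ W).card + (U ∩ W).card = W.card := by
  obtain ⟨S, l, h, hbalanced⟩ := IsDFSState.exists_balanced H W
  refine ⟨S, l.toFinset, ?_, ?_, by simpa using h.mem_of_adj, hbalanced⟩
  · exact Finset.disjoint_right.2 (by simpa using h.notMem)
  · rw [List.toFinset_card_of_nodup h.nodup]
    exact length_le_of_not_hasPath hℓ hH h.nodup h.isChain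

end DepthFirstSearch

section Clusters

variable {V : Type*} {H H' : SimpleGraph V} {U : Finset V}

/-- Some vertex of `A` is joined to some vertex of `B` by a walk in `H`. -/
def Joins (H : SimpleGraph V) (A B : Finset V) : Prop :=
  ∃ x ∈ A, ∃ y ∈ B, H.Reachable x y

lemma Joins.mono {A B : Finset V} (h : H ≤ H') (hH : Joins H A B) : Joins H' A B :=
  let ⟨x, hx, y, hy, hxy⟩ := hH
  ⟨x, hx, y, hy, hxy.mono h⟩

/-- The spanning subgraph of `H` formed by the edges with no endpoint in `U`. -/
def avoiding (H : SimpleGraph V) (U : Finset V) : SimpleGraph V where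
  Adj x y := H.Adj x y ∧ x ∉ U ∧ y ∉ U
  symm := ⟨fun _ _ ⟨h, hx, hy⟩ => ⟨h.symm, hy, hx⟩⟩
  loopless := ⟨fun _ h => h.1.ne rfl⟩

lemma avoiding_le : avoiding H U ≤ H := fun _ _ h => h.1

lemma avoiding_mono (h : H ≤ H') : avoiding H U ≤ avoiding H' U := fun _ _ hxy =>
  hxy.imp_left (h ·)

variable [Fintype V] {S : Finset V} {K : ℕ} {v w : V}

/-- The vertex set of the connected component of `v` in `H`. -/
def cluster (H : SimpleGraph V) (v : V) : Finset V :=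
  Finset.univ.filter (H.Reachable v)

lemma mem_cluster : w ∈ cluster H v ↔ H.Reachable v w := by
  simp [cluster]

lemma mem_cluster_self (H : SimpleGraph V) (v : V) : v ∈ cluster H v :=
  mem_cluster.2 .rfl

lemma cluster_eq_of_mem (h : w ∈ cluster H v) : cluster H w = cluster H v := by
  rw [mem_cluster] at h
  ext z
  rw [mem_cluster, mem_cluster]
  exact ⟨h.trans, h.symm.trans⟩

lemma cluster_mono (h : H ≤ H') (v : V) : cluster H v ⊆ cluster H' v := fun _ hw =>
  mem_cluster.2 ((mem_cluster.1 hw).mono h)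

lemma cluster_subset_of_closed (hS : ∀ x ∈ S, ∀ y, H.Adj x y → y ∈ S) (hv : v ∈ S) :
    cluster H v ⊆ S := by
  intro w hw
  by_contra hwS
  obtain ⟨P⟩ := mem_cluster.1 hw
  obtain ⟨e, -, hfst, hsnd⟩ := P.exists_boundary_dart (S : Set V) hv hwS
  exact hsnd (hS e.fst hfst e.snd e.adj)

/-- The vertices whose cluster in `H` has at least `K` vertices. -/
def bigVerts (H : SimpleGraph V) (K : ℕ) : Finset V :=
  Finset.univ.filter fun v => K ≤ (cluster H v).card

lemma mem_bigVerts : v ∈ bigVerts H K ↔ K ≤ (cluster H v).card := by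
  simp [bigVerts]

lemma bigVerts_mono (h : H ≤ H') (K : ℕ) : bigVerts H K ⊆ bigVerts H' K := fun v hv =>
  mem_bigVerts.2 ((mem_bigVerts.1 hv).trans (Finset.card_le_card (cluster_mono h v)))

lemma cluster_subset_bigVerts (hv : v ∈ bigVerts H K) : cluster H v ⊆ bigVerts H K := fun w hw =>
  mem_bigVerts.2 (by rw [cluster_eq_of_mem hw]; exact mem_bigVerts.1 hv)

/-- A cluster that becomes big contains, if it was small, an endpoint of a new edge. -/
lemma card_bigVerts_sdiff_le [DecidableEq V] {X : Finset V} (K : ℕ)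
    (hX : ∀ x y, H'.Adj x y → ¬ H.Adj x y → x ∈ X) :
    (bigVerts H' K \ bigVerts H K).card ≤ X.card * K := by
  set smallCluster : V → Finset V := fun x => if (cluster H x).card < K then cluster H x else ∅
  have card_smallCluster (x : V) : (smallCluster x).card ≤ K := by
    unfold smallCluster
    split_ifs with hx
    · exact hx.le
    · exact Nat.zero_le K
  have covered : bigVerts H' K \ bigVerts H K ⊆ X.biUnion smallCluster := by
    intro v hv
    rw [Finset.mem_sdiff, mem_bigVerts, mem_bigVerts, not_le] at hv
    obtain ⟨hbig, hsmall⟩ := hv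
    obtain ⟨w, hw', hw⟩ := Finset.exists_mem_notMem_of_card_lt_card (hsmall.trans_le hbig)
    obtain ⟨P⟩ := mem_cluster.1 hw'
    obtain ⟨e, -, hfst, hsnd⟩ :=
      P.exists_boundary_dart (cluster H v : Set V) (mem_cluster_self H v) hw
    have new_edge : ¬ H.Adj e.fst e.snd := fun h =>
      hsnd (mem_cluster.2 ((mem_cluster.1 hfst).trans h.reachable))
    refine Finset.mem_biUnion.2 ⟨e.fst, hX _ _ e.adj new_edge, ?_⟩
    simp only [smallCluster, cluster_eq_of_mem hfst, if_pos hsmall]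
    exact mem_cluster_self H v
  exact (Finset.card_le_card covered).trans
    (Finset.card_biUnion_le_card_mul X _ K fun x _ => card_smallCluster x)

lemma abs_card_bigVerts_insert_sub_le (e : Sym2 V) (s : Set (Sym2 V)) (K : ℕ) :
    |((bigVerts (.fromEdgeSet (insert e s)) K).card : ℝ) - (bigVerts (.fromEdgeSet s) K).card| ≤
      2 * K := by
  have mono : bigVerts (.fromEdgeSet s) K ⊆ bigVerts (.fromEdgeSet (insert e s)) K :=
    bigVerts_mono (SimpleGraph.fromEdgeSet_mono (Set.subset_insert e s)) K
  have few_new : (bigVerts (.fromEdgeSet (insert e s)) K \ bigVerts (.fromEdgeSet s) K).card ≤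
      e.toFinset.card * K := by
    refine card_bigVerts_sdiff_le K fun x y hxy hxy' => ?_
    simp only [SimpleGraph.fromEdgeSet_adj, Set.mem_insert_iff] at hxy hxy'
    have he : s(x, y) = e := by tauto
    simp [← he]
  have he : e.toFinset.card ≤ 2 := by
    grind [Sym2.card_toFinset]
  rw [← Nat.cast_sub (Finset.card_le_card mono), ← Finset.card_sdiff_of_subset mono, Nat.abs_cast]
  exact_mod_cast few_new.trans (Nat.mul_le_mul_right K he)

variable [DecidableEq V]

lemma card_bigVerts_sdiff_bigVerts_avoiding_le {d : ℕ} (hd : ∀ v, H.degree v ≤ d) :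
    (bigVerts H K \ bigVerts (avoiding H U) K).card ≤ (d + 1) * U.card * K := by
  have card_touched : (U ∪ U.biUnion fun v => H.neighborFinset v).card ≤ (d + 1) * U.card := by
    have := Finset.card_union_le U (U.biUnion fun v => H.neighborFinset v)
    have := Finset.card_biUnion_le_card_mul U (fun v => H.neighborFinset v) d fun v _ => hd v
    lia
  refine (card_bigVerts_sdiff_le K fun x y hxy hxy' => ?_).trans
    (Nat.mul_le_mul_right K card_touched)
  have : x ∈ U ∨ y ∈ U := by
    by_contra! h
    exact hxy' ⟨hxy, h⟩
  simp only [Finset.mem_union, Finset.mem_biUnion, SimpleGraph.mem_neighborFinset]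
  exact this.imp_right fun hy => ⟨y, hy, hxy.symm⟩

/-- The unions of clusters of `H` with at least `K` vertices. -/
def bigClusterUnions (H : SimpleGraph V) (K : ℕ) : Finset (Finset V) :=
  ((bigVerts H K).image (cluster H)).powerset.image fun 𝒜 => 𝒜.biUnion id

lemma card_bigClusterUnions_le (H : SimpleGraph V) (hK : 0 < K) :
    (bigClusterUnions H K).card ≤ 2 ^ (Fintype.card V / K) := by
  have card_bigClusters_mul_le :
      K * ((bigVerts H K).image (cluster H)).card ≤ (bigVerts H K).card := by
    refine Finset.mul_card_image_le_card _ K fun C hC => ?_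
    obtain ⟨v, hv, rfl⟩ := Finset.mem_image.1 hC
    refine (mem_bigVerts.1 hv).trans (Finset.card_le_card fun w hw => ?_)
    exact Finset.mem_filter.2 ⟨cluster_subset_bigVerts hv hw, cluster_eq_of_mem hw⟩
  calc (bigClusterUnions H K).card
      ≤ 2 ^ ((bigVerts H K).image (cluster H)).card :=
        Finset.card_image_le.trans_eq (Finset.card_powerset _)
    _ ≤ 2 ^ (Fintype.card V / K) := by
        refine Nat.pow_le_pow_right two_pos ((Nat.le_div_iff_mul_le hK).2 ?_)
        rw [mul_comm]
        exact card_bigClusters_mul_le.trans (bigVerts H K).card_le_univ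

lemma inter_bigVerts_mem_bigClusterUnions (hS : ∀ x ∈ S, ∀ y, H.Adj x y → y ∈ S) (K : ℕ) :
    S ∩ bigVerts H K ∈ bigClusterUnions H K := by
  refine Finset.mem_image.2 ⟨(S ∩ bigVerts H K).image (cluster H),
    Finset.mem_powerset.2 (Finset.image_subset_image Finset.inter_subset_right), ?_⟩
  rw [Finset.image_biUnion]
  refine (Finset.biUnion_subset.2 fun v hv => ?_).antisymm fun v hv =>
    Finset.mem_biUnion.2 ⟨v, hv, mem_cluster_self H v⟩
  rw [Finset.mem_inter] at hv
  exact Finset.subset_inter (cluster_subset_of_closed hS hv.1) (cluster_subset_bigVerts hv.2)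

lemma exists_not_joins_of_not_hasPath {H₁ H₂ : SimpleGraph V} {d : ℕ} {ℓ : ℝ} (hℓ : 0 ≤ ℓ)
    (hpath : ¬ HasPath (H₁ ⊔ H₂) ℓ) (hd : ∀ v, H₁.degree v ≤ d) (K : ℕ) :
    ∃ U : Finset V, U.card ≤ ℓ + 1 ∧ ∃ A ∈ bigClusterUnions (avoiding H₁ U) K,
      (bigVerts H₁ K).card ≤ 2 * A.card + (1 + 2 * (d + 1) * K) * U.card ∧
      (bigVerts H₁ K).card ≤
        2 * (bigVerts (avoiding H₁ U) K \ A).card + (1 + 2 * (d + 1) * K) * U.card ∧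
      ¬ Joins (avoiding H₂ U) A (bigVerts (avoiding H₁ U) K \ A) := by
  set W := bigVerts H₁ K
  obtain ⟨S, U, -, hU, hadj, hW⟩ := exists_balanced_cut_of_not_hasPath hℓ hpath W
  have closed {H : SimpleGraph V} (hH : H ≤ H₁ ⊔ H₂) :
      ∀ x ∈ S, ∀ y, (avoiding H U).Adj x y → y ∈ S := fun x hx y hxy =>
    (hadj x hx y (hH hxy.1)).resolve_right hxy.2.2
  set W' := bigVerts (avoiding H₁ U) K
  have card_lost : (W \ W').card ≤ (d + 1) * U.card * K :=
    card_bigVerts_sdiff_bigVerts_avoiding_le hd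
  have card_U_inter : (U ∩ W).card ≤ U.card := Finset.card_le_card Finset.inter_subset_left
  have inside_S : (S ∩ W).card ≤ (S ∩ W').card + (W \ W').card :=
    (Finset.card_le_card (by grind)).trans (Finset.card_union_le (S ∩ W') (W \ W'))
  have outside_S :
      W.card ≤ (S ∩ W).card + (U ∩ W).card + (W' \ (S ∩ W')).card + (W \ W').card := by
    have cover : W ⊆ (S ∩ W) ∪ (U ∩ W) ∪ (W' \ (S ∩ W')) ∪ (W \ W') := by grind
    grind [Finset.card_le_card cover, Finset.card_union_le]
  refine ⟨U, hU, S ∩ W', inter_bigVerts_mem_bigClusterUnions (closed le_sup_left) K,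
    by grind, by grind, ?_⟩
  rintro ⟨x, hx, y, hy, hxy⟩
  have hyS : y ∈ S := cluster_subset_of_closed (closed le_sup_right) (Finset.mem_inter.1 hx).1
    (mem_cluster.2 hxy)
  grind

end Clusters

section Exploration

lemma exists_mul_pow_add_le {p : ℝ} {m : ℕ} (hp : p ≤ 1) (hpm : 1 < p * m) :
    ∃ x ∈ Set.Ico (0 : ℝ) 1, p * x ^ m + (1 - p) ≤ x := by
  have hm : (0 : ℝ) < m := by
    rcases m.eq_zero_or_pos with rfl | hm
    · norm_num at hpm
    · exact_mod_cast hm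
  set t := p - 1 / m with ht
  have ht0 : 0 < t := sub_pos.2 ((div_lt_iff₀ hm).2 hpm)
  have ht1 : t ≤ 1 := by linarith [one_div_pos.2 hm]
  have one_add_mul : 1 + m * t = p * m := by
    rw [ht]
    field_simp
    ring
  have pow_mul_le : (1 - t) ^ m * (p * m) ≤ 1 :=
    calc (1 - t) ^ m * (p * m)
        ≤ (1 - t) ^ m * (1 + t) ^ m := by
          rw [← one_add_mul]
          have := one_add_mul_le_pow (by linarith : -2 ≤ t) m
          have : 0 ≤ 1 - t := sub_nonneg.2 ht1
          gcongr
      _ = (1 - t ^ 2) ^ m := by rw [← mul_pow]; ring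
      _ ≤ 1 := pow_le_one₀ (by nlinarith) (by nlinarith)
  refine ⟨1 - t, ⟨sub_nonneg.2 ht1, sub_lt_self 1 ht0⟩, ?_⟩
  have : p * (1 - t) ^ m ≤ 1 / m := (le_div_iff₀ hm).2 (by linarith)
  linarith

lemma eq_of_adj_of_induce_connected {V : Type*} {G : SimpleGraph V} {C : Finset V}
    (hC : (G.induce (C : Set V)).Connected)
    (hgirth : C.card + 1 < G.egirth) {x x' y : V} (hx : x ∈ C) (hx' : x' ∈ C) (hy : y ∉ C)
    (h : G.Adj x y) (h' : G.Adj x' y) : x = x' := by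
  by_contra hne
  obtain ⟨P, hP, hlen, hPC⟩ : ∃ P : G.Walk x x', P.IsPath ∧ P.length < C.card ∧
      ∀ z ∈ P.support, z ∈ C := by
    obtain ⟨P, hP⟩ := hC.exists_isPath ⟨x, hx⟩ ⟨x', hx'⟩
    let f : G.induce (C : Set V) →g G := (SimpleGraph.Embedding.induce _).toHom
    refine ⟨P.map f, hP.map Subtype.val_injective, ?_, fun z hz => ?_⟩
    · exact (SimpleGraph.Walk.length_map f P).trans_lt (by simpa using hP.length_lt)
    · obtain ⟨w, -, rfl⟩ : ∃ w ∈ P.support, f w = z :=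
        List.mem_map.1 (SimpleGraph.Walk.support_map f P ▸ hz)
      exact w.2
  have hyP : y ∉ P.support := fun h => hy (hPC y h)
  have hcycle : (SimpleGraph.Walk.cons h' (.cons h.symm P)).IsCycle := by
    refine SimpleGraph.Walk.cons_isCycle_iff _ _ |>.2 ⟨hP.cons hyP, ?_⟩
    rw [SimpleGraph.Walk.edges_cons, List.mem_cons, not_or, Sym2.eq_swap, Sym2.congr_right]
    exact ⟨Ne.symm hne, fun hmem => hyP (P.fst_mem_support_of_mem_edges hmem)⟩
  have := hgirth.trans_le (SimpleGraph.egirth_le_length hcycle)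
  rw [SimpleGraph.Walk.length_cons, SimpleGraph.Walk.length_cons] at this
  norm_cast at this
  lia

variable {G H : SimpleGraph V} {C : Finset V} {v : V}

/-- The edges of `G` joining `S` to its complement, so that `cutCard G S` is their number. -/
def edgeBoundary (G : SimpleGraph V) (S : Finset V) : Finset (Sym2 V) :=
  (edgeFinset' G).filter fun e => ∃ x ∈ S, ∃ y, y ∉ S ∧ e = s(x, y)

lemma mem_edgeBoundary {S : Finset V} {e : Sym2 V} :
    e ∈ edgeBoundary G S ↔ ∃ x ∈ S, ∃ y ∉ S, G.Adj x y ∧ e = s(x, y) := by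
  simp only [edgeBoundary, edgeFinset', Finset.mem_filter, Finset.mem_univ, true_and]
  constructor
  · rintro ⟨he, x, hx, y, hy, rfl⟩
    exact ⟨x, hx, y, hy, he, rfl⟩
  · rintro ⟨x, hx, y, hy, he, rfl⟩
    exact ⟨he, x, hx, y, hy, rfl⟩

lemma induce_insert_connected {V : Type*} [DecidableEq V] {G : SimpleGraph V} {C : Finset V}
    {a y : V} (hC : (G.induce (C : Set V)).Connected) (ha : a ∈ C) (hay : G.Adj a y) :
    (G.induce (insert y C : Finset V)).Connected := by
  have := SimpleGraph.induce_union_connected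
    (SimpleGraph.induce_pair_connected_of_adj hay.symm).preconnected hC.preconnected
    ⟨a, by simp, ha⟩
  rwa [Set.insert_union, Set.singleton_union, Set.insert_eq_of_mem (Finset.mem_coe.2 ha),
    ← Finset.coe_insert] at this

lemma insert_subset_cluster_sup {a y : V} (hCH : C ⊆ cluster H v) (ha : a ∈ C) (hay : a ≠ y) :
    insert y C ⊆ cluster (H ⊔ .fromEdgeSet {s(a, y)}) v := by
  have hCH' : C ⊆ cluster (H ⊔ .fromEdgeSet {s(a, y)}) v :=
    hCH.trans (cluster_mono le_sup_left v)
  refine Finset.insert_subset ?_ hCH'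
  refine mem_cluster.2 ((mem_cluster.1 (hCH' ha)).trans (SimpleGraph.Adj.reachable ?_))
  simp [hay]

lemma card_inter_edgeBoundary_insert {a y : V} {E : Finset (Sym2 V)} {m : ℕ}
    (hy : y ∉ C) (hay : G.Adj a y) (hunique : ∀ a' ∈ C, G.Adj a' y → a' = a)
    (hE : ∀ u ∉ C, ∀ w ∉ C, G.Adj u w → s(u, w) ∈ E) (hm : m < G.degree y) :
    (E ∩ edgeBoundary G C).card + m ≤
      (E.erase s(a, y) ∩ edgeBoundary G (insert y C)).card + 1 := by
  set N := (G.neighborFinset y).erase a with hN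
  have mem_N {z : V} : z ∈ N ↔ z ≠ a ∧ G.Adj y z := by simp [N]
  have outside {z : V} (hz : z ∈ N) : z ∉ C := fun hzC =>
    (mem_N.1 hz).1 (hunique z hzC (mem_N.1 hz).2.symm)
  have card_N : m ≤ (N.image (s(y, ·))).card := by
    rw [Finset.card_image_of_injective N fun z z' h => Sym2.congr_right.1 h, hN,
      Finset.card_erase_of_mem (by simpa using hay.symm), SimpleGraph.card_neighborFinset_eq_degree]
    exact Nat.le_sub_one_of_lt hm
  have disj : Disjoint ((E ∩ edgeBoundary G C).erase s(a, y)) (N.image (s(y, ·))) := by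
    simp only [Finset.disjoint_right, Finset.mem_image, Finset.mem_erase, Finset.mem_inter,
      mem_edgeBoundary]
    rintro - ⟨z, hz, rfl⟩ ⟨-, -, b, hb, w, -, -, h⟩
    have := outside hz
    grind only [Sym2.eq_iff]
  have sub : (E ∩ edgeBoundary G C).erase s(a, y) ∪ N.image (s(y, ·)) ⊆
      E.erase s(a, y) ∩ edgeBoundary G (insert y C) := by
    intro e he
    simp only [Finset.mem_union, Finset.mem_erase, Finset.mem_inter, Finset.mem_image,
      mem_edgeBoundary] at he ⊢
    rcases he with ⟨hne, heE, b, hb, z, hz, hbz, rfl⟩ | ⟨z, hz, rfl⟩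
    · refine ⟨⟨hne, heE⟩, b, Finset.mem_insert_of_mem hb, z, ?_, hbz, rfl⟩
      rw [Finset.mem_insert, not_or]
      refine ⟨?_, hz⟩
      rintro rfl
      exact hne (by rw [hunique b hb hbz])
    · have hzC := outside hz
      obtain ⟨-, hyz⟩ := mem_N.1 hz
      have hne : s(y, z) ≠ s(a, y) := by grind only [Sym2.eq_iff]
      refine ⟨⟨hne, hE y hy z hzC hyz⟩, y, Finset.mem_insert_self y C, z, ?_, hyz, rfl⟩
      rw [Finset.mem_insert, not_or]
      exact ⟨hyz.ne', hzC⟩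
  have := Finset.card_le_card sub
  rw [Finset.card_union_of_disjoint disj] at this
  have := Finset.pred_card_le_card_erase (s := E ∩ edgeBoundary G C) (a := s(a, y))
  lia

lemma subsetProb_card_cluster_lt_eq_zero {V : Type} [Fintype V] {H : SimpleGraph V}
    {C : Finset V} {v : V} {K : ℕ} {p : ℝ} {E : Finset (Sym2 V)}
    (hCH : C ⊆ cluster H v) (hK : K ≤ C.card) :
    subsetProb E p (fun s => (cluster (H ⊔ .fromEdgeSet s) v).card < K) = 0 := by
  have big (s : Finset (Sym2 V)) : K ≤ (cluster (H ⊔ .fromEdgeSet s) v).card :=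
    hK.trans (Finset.card_le_card (hCH.trans (cluster_mono le_sup_left v)))
  simp [subsetProb, subsetExp_const, (big _).not_gt]

/-- Exploration of the cluster of `v`: the edges of `H` have been found open, those of `E` have not
been tested yet, and `C` is the part of the cluster whose boundary is tested next. -/
lemma subsetProb_card_cluster_lt_le_pow {K m : ℕ} {p x : ℝ} (hp : p ∈ Set.Icc 0 1)
    (hx : x ∈ Set.Icc 0 1) (hpx : p * x ^ m + (1 - p) ≤ x) (hdeg : ∀ v, m < G.degree v)
    (hgirth : K < G.egirth) (E : Finset (Sym2 V)) (hC : (G.induce (C : Set V)).Connected)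
    (hCH : C ⊆ cluster H v) (hE : ∀ y ∉ C, ∀ z ∉ C, G.Adj y z → s(y, z) ∈ E) :
    subsetProb E p (fun s => (cluster (H ⊔ .fromEdgeSet s) v).card < K) ≤
      x ^ (E ∩ edgeBoundary G C).card := by
  induction E using Finset.strongInduction generalizing H C with
  | H E ih =>
  rcases (E ∩ edgeBoundary G C).eq_empty_or_nonempty with hF | ⟨e, he⟩
  · simpa [hF] using subsetProb_le_one hp E _
  rcases le_or_gt K C.card with hCK | hCK
  · exact (subsetProb_card_cluster_lt_eq_zero hCH hCK).trans_le (pow_nonneg hx.1 _)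
  have hF : 0 < (E ∩ edgeBoundary G C).card := Finset.card_pos.2 ⟨e, he⟩
  obtain ⟨heE, heC⟩ := Finset.mem_inter.1 he
  obtain ⟨a, ha, y, hy, hay, rfl⟩ := mem_edgeBoundary.1 heC
  have unique (a' : V) (ha' : a' ∈ C) (h : G.Adj a' y) : a' = a :=
    eq_of_adj_of_induce_connected hC (lt_of_le_of_lt (by exact_mod_cast hCK) hgirth) ha' ha hy h hay
  have hE' (u : V) (hu : u ∉ C) (w : V) (hw : w ∉ C) (h : G.Adj u w) :
      s(u, w) ∈ E.erase s(a, y) :=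
    Finset.mem_erase.2 ⟨by grind only [Sym2.eq_iff], hE u hu w hw h⟩
  have closed : subsetProb (E.erase s(a, y)) p
      (fun s => (cluster (H ⊔ .fromEdgeSet s) v).card < K) ≤
        x ^ ((E ∩ edgeBoundary G C).card - 1) := by
    have := ih _ (Finset.erase_ssubset heE) hC hCH hE'
    rwa [Finset.erase_inter, Finset.card_erase_of_mem he] at this
  have opened : subsetProb (E.erase s(a, y)) p
      (fun s => (cluster (H ⊔ .fromEdgeSet ↑(insert s(a, y) s)) v).card < K) ≤
        x ^ ((E ∩ edgeBoundary G C).card - 1 + m) := by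
    have := ih _ (Finset.erase_ssubset heE) (induce_insert_connected hC ha hay)
      (insert_subset_cluster_sup hCH ha hay.ne) fun u hu w hw => hE' u (by grind) w (by grind)
    simp only [Finset.coe_insert, Set.insert_eq, SimpleGraph.fromEdgeSet_union, ← sup_assoc]
    refine this.trans (pow_le_pow_of_le_one hx.1 hx.2 ?_)
    have := card_inter_edgeBoundary_insert hy hay unique hE (hdeg y)
    lia
  have hq : 0 ≤ 1 - p := sub_nonneg.2 hp.2
  have hx0 := hx.1
  rw [← Finset.insert_erase heE, subsetProb, subsetExp_insert (Finset.notMem_erase _ _),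
    Finset.insert_erase heE]
  set k := (E ∩ edgeBoundary G C).card - 1
  calc _ ≤ p * x ^ (k + m) + (1 - p) * x ^ k := by gcongr; exacts [hp.1, opened, closed]
    _ = x ^ k * (p * x ^ m + (1 - p)) := by ring
    _ ≤ x ^ k * x := by gcongr
    _ = x ^ (E ∩ edgeBoundary G C).card := by rw [← pow_succ, Nat.sub_add_cancel hF]

end Exploration

section Concentration

variable {V : Type} [Fintype V] {G : SimpleGraph V}

lemma subsetProb_card_cluster_lt_le {K m : ℕ} {p x : ℝ} (hp : p ∈ Set.Icc 0 1)
    (hx : x ∈ Set.Icc 0 1) (hpx : p * x ^ m + (1 - p) ≤ x) (hdeg : ∀ v, m < G.degree v)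
    (hgirth : K < G.egirth) (v : V) :
    subsetProb (edgeFinset' G) p (fun s => (cluster (.fromEdgeSet s) v).card < K) ≤ x := by
  have hconn : (G.induce (({v} : Finset V) : Set V)).Connected := by
    rw [Finset.coe_singleton, SimpleGraph.induce_singleton_eq_top]
    exact SimpleGraph.connected_top
  obtain ⟨w, hw⟩ := (G.degree_pos_iff_exists_adj v).1 (Nat.zero_lt_of_lt (hdeg v))
  have hvw : s(v, w) ∈ edgeFinset' G ∩ edgeBoundary G {v} :=
    Finset.mem_inter.2 ⟨by simpa [edgeFinset'] using hw,
      mem_edgeBoundary.2 ⟨v, by simp, w, by simpa using hw.ne', hw, rfl⟩⟩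
  have := subsetProb_card_cluster_lt_le_pow (H := ⊥) hp hx hpx hdeg hgirth (edgeFinset' G) hconn
    (by simpa using mem_cluster_self ⊥ v) fun y _ z _ h => by simpa [edgeFinset'] using h
  simp only [bot_sup_eq] at this
  exact this.trans (pow_le_of_le_one hx.1 hx.2 (Finset.card_ne_zero_of_mem hvw))

lemma card_edgeFinset'_le {d : ℕ} (hd : ∀ v, G.degree v ≤ d) :
    (edgeFinset' G).card ≤ Fintype.card V * d := by
  have hE : edgeFinset' G = G.edgeFinset := by ext; simp [edgeFinset']
  have := G.sum_degrees_eq_twice_card_edges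
  have := Finset.sum_le_card_nsmul Finset.univ (fun v => G.degree v) d fun v _ => hd v
  rw [hE]
  simp_all
  lia

lemma le_subsetExp_card_bigVerts {K m : ℕ} {p x : ℝ} (hp : p ∈ Set.Icc 0 1)
    (hx : x ∈ Set.Icc 0 1) (hpx : p * x ^ m + (1 - p) ≤ x) (hdeg : ∀ v, m < G.degree v)
    (hgirth : K < G.egirth) :
    (1 - x) * Fintype.card V ≤
      subsetExp (edgeFinset' G) p fun s => (bigVerts (.fromEdgeSet (s : Set (Sym2 V))) K).card := by
  calc (1 - x) * Fintype.card V = ∑ _v : V, (1 - x) := by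
        rw [Finset.sum_const, Finset.card_univ, nsmul_eq_mul, mul_comm]
    _ ≤ ∑ v : V, subsetProb (edgeFinset' G) p
          (fun s => K ≤ (cluster (.fromEdgeSet s) v).card) := by
        gcongr with v
        have := subsetProb_card_cluster_lt_le hp hx hpx hdeg hgirth v
        have := subsetProb_compl (p := p) (edgeFinset' G)
          fun s => (cluster (.fromEdgeSet (s : Set (Sym2 V))) v).card < K
        simp only [not_lt] at this
        linarith
    _ = _ := by
        simp only [subsetProb, ← subsetExp_sum, bigVerts, Finset.card_filter]
        push_cast
        congr!

lemma exists_subsetProb_card_bigVerts_le_le_exp {m : ℕ} {p : ℝ} (hp : p ∈ Set.Icc 0 1)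
    (hpm : 1 < p * m) :
    ∃ θ > (0 : ℝ), ∀ K : ℕ, 0 < K → ∃ c > (0 : ℝ), ∀ (V : Type) [Fintype V]
      (G : SimpleGraph V), G.IsRegularOfDegree (m + 1) → K < G.egirth →
      subsetProb (edgeFinset' G) p
          (fun s => (bigVerts (.fromEdgeSet (s : Set (Sym2 V))) K).card ≤ θ * Fintype.card V) ≤
        Real.exp (-c * Fintype.card V) := by
  obtain ⟨x, hx, hpx⟩ := exists_mul_pow_add_le hp.2 hpm
  have hx1 : 0 < 1 - x := sub_pos.2 hx.2
  refine ⟨(1 - x) / 2, by positivity, fun K hK =>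
    ⟨2 * ((1 - x) / 2) ^ 2 / ((m + 1) * (2 * K) ^ 2), by positivity, ?_⟩⟩
  intro V _ G hG hgirth
  set n := Fintype.card V
  rcases n.eq_zero_or_pos with hn | hn
  · simpa [hn] using subsetProb_le_one hp _ _
  have hmean := le_subsetExp_card_bigVerts hp ⟨hx.1, hx.2.le⟩ hpx
    (fun v => (hG v).ge) hgirth
  have lipschitz (e : Sym2 V) (s : Finset (Sym2 V)) :=
    abs_card_bigVerts_insert_sub_le e (s : Set (Sym2 V)) K
  simp only [← Finset.coe_insert] at lipschitz
  have hE : ((edgeFinset' G).card : ℝ) ≤ n * (m + 1) :=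
    mod_cast card_edgeFinset'_le fun v => (hG v).le
  have hE0 : 0 < (edgeFinset' G).card := by
    obtain ⟨v⟩ := Fintype.card_pos_iff.1 hn
    obtain ⟨w, hw⟩ := (G.degree_pos_iff_exists_adj v).1 (by rw [hG v]; lia)
    exact Finset.card_pos.2 ⟨s(v, w), by simpa [edgeFinset'] using hw⟩
  refine (subsetProb_mono hp fun s _ hs => hs.trans (by linarith)).trans
    ((subsetProb_le_subsetExp_sub (a := (1 - x) / 2 * n) hp (fun e _ s _ => lipschitz e s)
      (by positivity)).trans ?_)
  rw [Real.exp_le_exp, neg_mul, neg_le_neg_iff]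
  calc _ = 2 * ((1 - x) / 2 * n) ^ 2 / (n * (m + 1) * (2 * K) ^ 2) := by field_simp
    _ ≤ _ := by gcongr

end Concentration

section Expansion

variable {V : Type} [Fintype V] {G : SimpleGraph V} {A B S U : Finset V} {d i : ℕ} {v : V}

/-- The vertices joined to `A` by a walk in `G` of length at most `i`. -/
def ballAround (G : SimpleGraph V) (A : Finset V) (i : ℕ) : Finset V :=
  Finset.univ.filter fun v => ∃ a ∈ A, ∃ P : G.Walk a v, P.length ≤ i

lemma mem_ballAround : v ∈ ballAround G A i ↔ ∃ a ∈ A, ∃ P : G.Walk a v, P.length ≤ i := by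
  simp [ballAround]

lemma subset_ballAround (i : ℕ) : A ⊆ ballAround G A i := fun a ha =>
  mem_ballAround.2 ⟨a, ha, .nil, i.zero_le⟩

lemma ballAround_subset_succ : ballAround G A i ⊆ ballAround G A (i + 1) := fun _ hv =>
  let ⟨a, ha, P, hP⟩ := mem_ballAround.1 hv
  mem_ballAround.2 ⟨a, ha, P, hP.trans i.le_succ⟩

lemma mem_ballAround_succ_of_adj {w : V} (hv : v ∈ ballAround G A i) (h : G.Adj v w) :
    w ∈ ballAround G A (i + 1) :=
  let ⟨a, ha, P, hP⟩ := mem_ballAround.1 hv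
  mem_ballAround.2 ⟨a, ha, P.concat h, by simpa using hP⟩

variable [DecidableEq V]

lemma card_edgeBoundary_le {T : Finset V} (hd : ∀ v, G.degree v ≤ d)
    (hT : ∀ x ∈ S, ∀ y, G.Adj x y → y ∈ T) :
    (edgeBoundary G S).card ≤ (T \ S).card * d := by
  have hsub : edgeBoundary G S ⊆ (T \ S).biUnion (G.incidenceFinset ·) := by
    intro e he
    obtain ⟨x, hx, y, hy, hxy, rfl⟩ := mem_edgeBoundary.1 he
    refine Finset.mem_biUnion.2 ⟨y, Finset.mem_sdiff.2 ⟨hT x hx y hxy, hy⟩, ?_⟩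
    simpa [SimpleGraph.mk'_mem_incidenceSet_iff] using hxy
  refine (Finset.card_le_card hsub).trans (Finset.card_biUnion_le_card_mul _ _ _ fun y _ => ?_)
  simpa using hd y

lemma mul_le_mul_card_ballAround {γ : ℝ} (hd : ∀ v, G.degree v ≤ d)
    (hcut : ∀ S, A.card ≤ S.card → 2 * S.card ≤ Fintype.card V → γ ≤ (edgeBoundary G S).card)
    (i : ℕ) (hi : 2 * (ballAround G A i).card ≤ Fintype.card V) :
    i * γ ≤ d * (ballAround G A i).card := by
  induction i with
  | zero => simpa using by positivity
  | succ i ih =>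
    have hle := Finset.card_le_card (ballAround_subset_succ (G := G) (A := A) (i := i))
    have hball : 2 * (ballAround G A i).card ≤ Fintype.card V := by lia
    have hγ := hcut _ (Finset.card_le_card (subset_ballAround i)) hball
    have hgrow := card_edgeBoundary_le hd fun x hx y (h : G.Adj x y) =>
      mem_ballAround_succ_of_adj (A := A) (i := i) hx h
    rw [Finset.card_sdiff_of_subset ballAround_subset_succ] at hgrow
    have hgrow' : (edgeBoundary G (ballAround G A i)).card ≤
        ((ballAround G A (i + 1)).card - (ballAround G A i).card : ℝ) * d := by
      rw [← Nat.cast_sub hle]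
      exact_mod_cast hgrow
    push_cast
    linarith [ih hball]

lemma exists_walk_length_le {β γ : ℝ} (hd : ∀ v, G.degree v ≤ d)
    (hcut : ∀ S : Finset V, β ≤ S.card → 2 * S.card ≤ Fintype.card V →
      γ ≤ (edgeBoundary G S).card)
    (hA : β ≤ A.card) (hB : β ≤ B.card) (hi : d * Fintype.card V < 2 * (i * γ)) :
    ∃ a ∈ A, ∃ b ∈ B, ∃ P : G.Walk a b, P.length ≤ 2 * i := by
  have half (S : Finset V) (hS : β ≤ S.card) :
      Fintype.card V < 2 * (ballAround G S i).card := by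
    by_contra! h
    have hgrow := mul_le_mul_card_ballAround hd
      (fun T hT => hcut T (hS.trans (Nat.cast_le.2 hT))) i h
    have : (d * (2 * (ballAround G S i).card) : ℝ) ≤ d * Fintype.card V := by
      gcongr
      exact_mod_cast h
    linarith
  have hmeet : ¬Disjoint (ballAround G A i) (ballAround G B i) := fun hdisj => by
    have := Finset.card_le_univ (ballAround G A i ∪ ballAround G B i)
    rw [Finset.card_union_of_disjoint hdisj] at this
    linarith [half A hA, half B hB]
  obtain ⟨v, hvA, hvB⟩ := Finset.not_disjoint_iff.1 hmeet
  obtain ⟨a, ha, P, hP⟩ := mem_ballAround.1 hvA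
  obtain ⟨b, hb, Q, hQ⟩ := mem_ballAround.1 hvB
  refine ⟨a, ha, b, hb, P.append Q.reverse, ?_⟩
  rw [SimpleGraph.Walk.length_append, SimpleGraph.Walk.length_reverse]
  lia

lemma IsExpander.degree_le {b : ℝ} (hG : IsExpander G b d) (v : V) : G.degree v ≤ d := by
  rw [← SimpleGraph.card_neighborFinset_eq_degree, SimpleGraph.neighborFinset,
    ← Set.ncard_eq_toFinset_card']
  exact hG.1 v

lemma IsExpander.mul_card_le_card_edgeBoundary_add {b : ℝ} (hG : IsExpander G b d)
    (D : Finset (Sym2 V)) (U : Finset V) (hS : 2 * S.card ≤ Fintype.card V) :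
    b * S.card ≤
      (edgeBoundary (avoiding (G.deleteEdges D) U) S).card + (D.card + d * U.card) := by
  have hsub : edgeBoundary G S ⊆
      edgeBoundary (avoiding (G.deleteEdges D) U) S ∪ (D ∪ U.biUnion (G.incidenceFinset ·)) := by
    intro e he
    obtain ⟨x, hx, y, hy, hxy, rfl⟩ := mem_edgeBoundary.1 he
    by_cases hD : s(x, y) ∈ D
    · simp [hD]
    by_cases hU : x ∉ U ∧ y ∉ U
    · refine Finset.mem_union_left _ (mem_edgeBoundary.2 ⟨x, hx, y, hy, ⟨?_, hU⟩, rfl⟩)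
      simpa using ⟨hxy, hD⟩
    · simp only [Finset.mem_union, Finset.mem_biUnion, SimpleGraph.mem_incidenceFinset,
        SimpleGraph.mk'_mem_incidenceSet_iff]
      grind
  have htouch : (U.biUnion (G.incidenceFinset ·)).card ≤ U.card * d :=
    Finset.card_biUnion_le_card_mul _ _ _ fun y _ => by simpa using hG.degree_le y
  have hcard : (edgeBoundary G S).card ≤
      (edgeBoundary (avoiding (G.deleteEdges D) U) S).card + (D.card + U.card * d) := by
    refine (Finset.card_le_card hsub).trans ((Finset.card_union_le _ _).trans ?_)
    grw [Finset.card_union_le, htouch]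
  calc b * S.card ≤ (edgeBoundary G S).card :=
        hG.2 S (by rw [le_div_iff₀ two_pos, mul_comm]; exact_mod_cast hS)
    _ ≤ _ := by rw [mul_comm (d : ℝ)]; exact_mod_cast hcard

lemma IsExpander.exists_joins_avoiding [Nonempty V] {b α : ℝ} (hG : IsExpander G b d)
    (hb : 0 ≤ b) (hA : α * Fintype.card V ≤ A.card) (hB : α * Fintype.card V ≤ B.card)
    {D : Finset (Sym2 V)} (hD : D.card + d * U.card ≤ b * (α * Fintype.card V) / 2)
    (hi : d < i * (b * α)) :
    ∃ Q ⊆ edgeFinset' G \ D, Q.card ≤ 2 * i ∧ Joins (avoiding (.fromEdgeSet Q) U) A B := by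
  set G' := avoiding (G.deleteEdges D) U
  have hG' : G' ≤ G := avoiding_le.trans (G.deleteEdges_le _)
  have hd (v : V) : G'.degree v ≤ d := (SimpleGraph.degree_le_of_le hG').trans (hG.degree_le v)
  have hcut (S : Finset V) (hS : α * Fintype.card V ≤ S.card)
      (hS' : 2 * S.card ≤ Fintype.card V) :
      b * (α * Fintype.card V) / 2 ≤ (edgeBoundary G' S).card := by
    have := hG.mul_card_le_card_edgeBoundary_add D U hS'
    have := mul_le_mul_of_nonneg_left hS hb
    linarith
  have hn : (0 : ℝ) < Fintype.card V := mod_cast Fintype.card_pos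
  obtain ⟨x, hx, y, hy, P, hP⟩ := exists_walk_length_le hd hcut hA hB (i := i) (by nlinarith)
  refine ⟨P.edges.toFinset, fun e he => ?_, ?_, x, hx, y, hy, ?_⟩
  · induction e with | _ u v =>
    have huv : G'.Adj u v := P.adj_of_mem_edges (List.mem_toFinset.1 he)
    simpa [edgeFinset'] using huv.1
  · exact (List.toFinset_card_le _).trans (P.length_edges.trans_le hP)
  · refine (P.transfer _ fun e he => ?_).reachable
    induction e with | _ u v =>
    have huv : G'.Adj u v := P.adj_of_mem_edges he
    exact ⟨by simpa using ⟨he, huv.ne⟩, huv.2⟩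

end Expansion

section Sprinkling

lemma card_filter_card_le_le_exp {V : Type*} [Fintype V] {η L : ℝ} (hη : 0 < η)
    (hL : L ≤ η ^ 2 * Fintype.card V) :
    ((Finset.univ.filter fun U : Finset V => (U.card : ℝ) ≤ L).card : ℝ) ≤
      Real.exp (2 * η * Fintype.card V) := by
  set n := Fintype.card V
  set q := Real.exp (-η⁻¹) with hq
  have hqη : q ≤ η := by
    rw [hq, Real.exp_neg]
    exact inv_le_of_inv_le₀ hη (by linarith [Real.add_one_le_exp η⁻¹])
  have weight_le : ∑ U : Finset V, q ^ U.card ≤ Real.exp (η * n) :=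
    calc ∑ U : Finset V, q ^ U.card = (q + 1) ^ n := by
          simpa using Fintype.sum_pow_mul_eq_add_pow V q 1
      _ ≤ Real.exp η ^ n := by
          gcongr
          linarith [Real.add_one_le_exp η]
      _ = Real.exp (η * n) := by rw [mul_comm, Real.exp_nat_mul]
  have le_weight (U : Finset V) (hU : U ∈ Finset.univ.filter fun U : Finset V => U.card ≤ L) :
      Real.exp (-(η * n)) ≤ q ^ U.card := by
    rw [hq, ← Real.exp_nat_mul, Real.exp_le_exp, mul_neg, neg_le_neg_iff, ← div_eq_mul_inv,
      div_le_iff₀ hη]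
    linarith [(Finset.mem_filter.1 hU).2]
  have := (Finset.card_nsmul_le_sum _ _ _ le_weight).trans <|
    (Finset.sum_le_univ_sum_of_nonneg fun U => by positivity).trans weight_le
  rw [nsmul_eq_mul, Real.exp_neg, ← div_eq_mul_inv, div_le_iff₀ (Real.exp_pos _),
    ← Real.exp_add] at this
  exact this.trans_eq (by ring_nf)

variable {V : Type} [Fintype V] [DecidableEq V] {G H : SimpleGraph V} {b p α M ℓ : ℝ} {d i K : ℕ}

lemma subsetProb_not_joins_avoiding_le [Nonempty V] {A B U : Finset V} (hp : p ∈ Set.Icc 0 1)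
    (hG : IsExpander G b d) (hb : 0 ≤ b) (hA : α * Fintype.card V ≤ A.card)
    (hB : α * Fintype.card V ≤ B.card) (hM : 0 ≤ M)
    (hMU : M + d * U.card ≤ b * (α * Fintype.card V) / 2) (hi : d < i * (b * α)) :
    subsetProb (edgeFinset' G) p (fun t => ¬ Joins (avoiding (.fromEdgeSet t) U) A B) ≤
      Real.exp (1 - p ^ (2 * i) * (M / (2 * i : ℕ))) := by
  refine subsetProb_not_le_exp hp (fun s t hst h => ?_) hM fun D hD =>
    hG.exists_joins_avoiding hb hA hB (by linarith) hi
  exact h.mono (avoiding_mono (SimpleGraph.fromEdgeSet_mono (Finset.coe_subset.2 hst)))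

lemma subsetProb_not_hasPath_sup_le [Nonempty V] (hp : p ∈ Set.Icc 0 1) (hG : IsExpander G b d)
    (hb : 0 ≤ b) (hHG : H ≤ G) (hK : 0 < K) (hℓ : 0 ≤ ℓ)
    (hbig : 2 * (α * Fintype.card V) + (1 + 2 * (d + 1) * K) * (ℓ + 1) ≤ (bigVerts H K).card)
    (hM : 0 ≤ M) (hMℓ : M + d * (ℓ + 1) ≤ b * (α * Fintype.card V) / 2)
    (hi : d < i * (b * α)) :
    subsetProb (edgeFinset' G) p (fun t => ¬ HasPath (H ⊔ .fromEdgeSet t) ℓ) ≤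
      (Finset.univ.filter fun U : Finset V => (U.card : ℝ) ≤ ℓ + 1).card *
        (2 ^ (Fintype.card V / K) * Real.exp (1 - p ^ (2 * i) * (M / (2 * i : ℕ)))) := by
  set Q : Finset V → Finset V → Finset (Sym2 V) → Prop := fun U A t =>
    α * Fintype.card V ≤ A.card ∧
      α * Fintype.card V ≤ (bigVerts (avoiding H U) K \ A).card ∧
      ¬ Joins (avoiding (.fromEdgeSet t) U) A (bigVerts (avoiding H U) K \ A)
  have exists_cut (t : Finset (Sym2 V)) (ht : ¬ HasPath (H ⊔ .fromEdgeSet t) ℓ) :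
      ∃ U ∈ Finset.univ.filter fun U : Finset V => (U.card : ℝ) ≤ ℓ + 1,
        ∃ A ∈ bigClusterUnions (avoiding H U) K, Q U A t := by
    obtain ⟨U, hU, A, hA, hcardA, hcardB, hjoins⟩ := exists_not_joins_of_not_hasPath hℓ ht
      (fun v => (SimpleGraph.degree_le_of_le hHG).trans (hG.degree_le v)) K
    have hcardU : (1 + 2 * (d + 1) * K) * U.card ≤ (1 + 2 * (d + 1) * K) * (ℓ + 1) := by gcongr
    refine ⟨U, by simpa using hU, A, hA, ?_, ?_, hjoins⟩
    · have : ((bigVerts H K).card : ℝ) ≤ 2 * A.card + (1 + 2 * (d + 1) * K) * U.card :=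
        mod_cast hcardA
      linarith
    · have : ((bigVerts H K).card : ℝ) ≤ 2 * (bigVerts (avoiding H U) K \ A).card +
          (1 + 2 * (d + 1) * K) * U.card := mod_cast hcardB
      linarith
  refine subsetProb_le_card_mul hp (fun t _ ht => exists_cut t ht) fun U hU => ?_
  have hMU : M + d * U.card ≤ b * (α * Fintype.card V) / 2 := by
    have := (Finset.mem_filter.1 hU).2
    exact hMℓ.trans' (by gcongr)
  calc _ ≤ _ := subsetProb_le_card_mul hp (fun _ _ h => h) fun A _ => ?_
    _ ≤ _ := mul_le_mul_of_nonneg_right (mod_cast card_bigClusterUnions_le _ hK) (Real.exp_nonneg _)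
  by_cases h : α * Fintype.card V ≤ A.card ∧
      α * Fintype.card V ≤ (bigVerts (avoiding H U) K \ A).card
  · exact (subsetProb_mono hp fun _ _ ht => ht.2.2).trans
      (subsetProb_not_joins_avoiding_le hp hG hb h.1 h.2 hM hMU hi)
  · have hQ (t : Finset (Sym2 V)) : ¬ Q U A t := fun ht => h ⟨ht.1, ht.2.1⟩
    simpa [hQ, subsetProb, subsetExp_const] using Real.exp_nonneg _

open Filter Topology in
lemma eventually_mul_le (a : ℝ) {r : ℝ} (hr : 0 < r) : ∀ᶠ x in 𝓝[>] (0 : ℝ), a * x ≤ r := by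
  have : Tendsto (a * ·) (𝓝 (0 : ℝ)) (𝓝 0) := by
    simpa using (continuous_const_mul a).tendsto 0
  exact nhdsWithin_le_nhds ((this.eventually_lt_const hr).mono fun _ => le_of_lt)

lemma two_pow_div_le_exp (n : ℕ) {K : ℕ} {κ : ℝ} (hK : 4 / κ < K) (hκ : 0 < κ) :
    (2 : ℝ) ^ (n / K) ≤ Real.exp (κ / 4 * n) := by
  have hK0 : (0 : ℝ) < K := hK.trans' (by positivity)
  calc (2 : ℝ) ^ (n / K) ≤ Real.exp 1 ^ (n / K) := by
        gcongr
        linarith [Real.add_one_le_exp 1]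
    _ = Real.exp ((n / K : ℕ) * 1) := (Real.exp_nat_mul 1 _).symm
    _ ≤ Real.exp (n / K) := by
        rw [Real.exp_le_exp, mul_one]
        exact Nat.cast_div_le
    _ ≤ Real.exp (κ / 4 * n) := by
        rw [Real.exp_le_exp, div_le_iff₀ hK0]
        rw [div_lt_iff₀ hκ] at hK
        nlinarith

lemma exists_subsetProb_not_hasPath_sup_le (hb : 0 < b) (hp : p ∈ Set.Ioc 0 1) {θ : ℝ}
    (hθ : 0 < θ) (d : ℕ) :
    ∃ K : ℕ, 0 < K ∧ ∃ δ > (0 : ℝ), ∃ c > (0 : ℝ), ∃ N : ℝ, ∀ (V : Type) [Fintype V]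
      [DecidableEq V] (G H : SimpleGraph V), IsExpander G b d → H ≤ G →
      θ * Fintype.card V ≤ (bigVerts H K).card → N ≤ Fintype.card V →
      subsetProb (edgeFinset' G) p
          (fun t => ¬ HasPath (H ⊔ .fromEdgeSet t) (δ * Fintype.card V)) ≤
        Real.exp (-c * Fintype.card V) := by
  obtain ⟨hp0, hp1⟩ := hp
  obtain ⟨i, hi⟩ : ∃ i : ℕ, d < i * (b * (θ / 4)) :=
    (exists_nat_gt (d / (b * (θ / 4)))).imp fun i h => (div_lt_iff₀ (by positivity)).1 h
  have hi0 : 0 < i := Nat.pos_of_ne_zero fun h => by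
    rw [h, Nat.cast_zero, zero_mul] at hi
    exact hi.not_ge d.cast_nonneg
  set κ := p ^ (2 * i) * (b * (θ / 16) / (2 * i : ℕ)) with hκ
  have hκ0 : 0 < κ := by positivity
  obtain ⟨K, hK⟩ := exists_nat_gt (4 / κ)
  have hK0 : (0 : ℝ) < K := hK.trans' (by positivity)
  obtain ⟨δ, hδ, hδκ, hδK, hδd⟩ : ∃ δ > (0 : ℝ), 2 * δ ≤ (κ / 8) ^ 2 ∧
      (1 + 2 * (d + 1) * K) * 2 * δ ≤ θ / 2 ∧ d * 2 * δ ≤ b * (θ / 16) :=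
    (eventually_mem_nhdsWithin.and <| (eventually_mul_le _ (by positivity)).and <|
      (eventually_mul_le _ (by positivity)).and (eventually_mul_le _ (by positivity))).exists
  refine ⟨K, mod_cast hK0, δ, hδ, κ / 4, by positivity, max (1 / δ) (4 / κ), ?_⟩
  intro V _ _ G H hG hHG hbig hN
  set n := Fintype.card V
  have hδn : 1 ≤ δ * n := (div_le_iff₀' hδ).1 ((le_max_left _ _).trans hN)
  have hκn : 4 ≤ κ * n := (div_le_iff₀' hκ0).1 ((le_max_right _ _).trans hN)
  have hn : (0 : ℝ) < n := by by_contra! h; nlinarith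
  have : Nonempty V := Fintype.card_pos_iff.1 (mod_cast hn)
  refine (subsetProb_not_hasPath_sup_le (α := θ / 4) (M := b * (θ / 16) * n) ⟨hp0.le, hp1⟩ hG hb.le
    hHG (mod_cast hK0) (by positivity) ?_ (by positivity) ?_ hi).trans ?_
  · nlinarith
  · nlinarith
  have exponent : p ^ (2 * i) * (b * (θ / 16) * n / (2 * i : ℕ)) = κ * n := by
    rw [hκ]
    ring
  rw [exponent]
  calc _ ≤ Real.exp (2 * (κ / 8) * n) * (Real.exp (κ / 4 * n) * Real.exp (1 - κ * n)) := by
        gcongr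
        · exact card_filter_card_le_le_exp (by positivity) (by nlinarith)
        · exact two_pow_div_le_exp n hK hκ0
    _ = Real.exp (1 - κ / 2 * n) := by
        rw [← Real.exp_add, ← Real.exp_add]
        ring_nf
    _ ≤ Real.exp (-(κ / 4) * n) := Real.exp_le_exp.2 (by linarith)

end Sprinkling

section PercolatedExpander

open Filter Topology in
lemma exists_exp_add_exp_le {c₁ c₂ : ℝ} (h₁ : 0 < c₁) (h₂ : 0 < c₂) :
    ∃ c > 0, ∃ N, ∀ x ≥ N, Real.exp (-c₁ * x) + Real.exp (-c₂ * x) ≤ Real.exp (-c * x) := by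
  obtain ⟨c, hc, hc₁₂⟩ := exists_between (lt_min h₁ h₂)
  rw [lt_min_iff] at hc₁₂
  have h : Tendsto (fun x => Real.exp (-(c₁ - c) * x) + Real.exp (-(c₂ - c) * x)) atTop (𝓝 0) := by
    have hdecay {a : ℝ} (ha : c < a) : Tendsto (fun x => Real.exp (-(a - c) * x)) atTop (𝓝 0) :=
      Real.tendsto_exp_atBot.comp (tendsto_id.const_mul_atTop_of_neg (by linarith))
    simpa using (hdecay hc₁₂.1).add (hdecay hc₁₂.2)
  obtain ⟨N, hN⟩ := eventually_atTop.1 (h.eventually_le_const one_pos)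
  refine ⟨c, hc, N, fun x hx => ?_⟩
  calc Real.exp (-c₁ * x) + Real.exp (-c₂ * x)
      = (Real.exp (-(c₁ - c) * x) + Real.exp (-(c₂ - c) * x)) * Real.exp (-c * x) := by
        rw [add_mul, ← Real.exp_add, ← Real.exp_add]
        ring_nf
    _ ≤ Real.exp (-c * x) := mul_le_of_le_one_left (Real.exp_nonneg _) (hN x hx)

lemma exists_sprinkling {a p : ℝ} (hap : a < p) (hp : p < 1) :
    ∃ p₁ ∈ Set.Ioo a p, ∃ p₂ ∈ Set.Ioc (0 : ℝ) 1, 1 - p = (1 - p₁) * (1 - p₂) := by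
  obtain ⟨p₁, hap₁, hp₁⟩ := exists_between hap
  have h : 0 < 1 - p₁ := by linarith
  refine ⟨p₁, ⟨hap₁, hp₁⟩, (p - p₁) / (1 - p₁),
    ⟨div_pos (by linarith) h, (div_le_one h).2 (by linarith)⟩, ?_⟩
  field_simp
  ring

lemma girth_le_card {V : Type*} [Fintype V] (G : SimpleGraph V) : G.girth ≤ Fintype.card V := by
  by_cases hG : G.IsAcyclic
  · simp [SimpleGraph.girth_eq_zero.2 hG]
  · obtain ⟨_, w, hw, h⟩ := SimpleGraph.exists_girth_eq_length.2 hG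
    simpa [h] using hw.support_nodup.length_le_card

variable {V : Type} [Fintype V] {G : SimpleGraph V}

lemma IsRegularExpander.isRegularOfDegree [DecidableEq V] {b : ℝ} {d : ℕ}
    (hG : IsRegularExpander G b d) : G.IsRegularOfDegree d := fun v => by
  rw [← SimpleGraph.card_neighborFinset_eq_degree, SimpleGraph.neighborFinset,
    ← Set.ncard_eq_toFinset_card', hG.2 v]

lemma percProb_eq_one_sub (G : SimpleGraph V) (p : ℝ) (P : SimpleGraph V → Prop) :
    percProb G p P = 1 - subsetProb (edgeFinset' G) p (fun s => ¬ P (.fromEdgeSet s)) := by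
  have h := subsetProb_compl (p := p) (edgeFinset' G) fun s => P (.fromEdgeSet s)
  have hperc : percProb G p P = subsetProb (edgeFinset' G) p fun s => P (.fromEdgeSet s) := rfl
  linarith

lemma le_percProb_of_sprinkle {p p₁ p₂ B₁ B₂ : ℝ} {P Q : SimpleGraph V → Prop}
    (hp₁ : p₁ ∈ Set.Icc 0 1) (hp₂ : p₂ ∈ Set.Icc 0 1) (h : 1 - p = (1 - p₁) * (1 - p₂))
    (hB₂ : 0 ≤ B₂) (hQ : subsetProb (edgeFinset' G) p₁ (fun s => ¬ Q (.fromEdgeSet s)) ≤ B₁)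
    (hP : ∀ H ≤ G, Q H →
      subsetProb (edgeFinset' G) p₂ (fun t => ¬ P (H ⊔ .fromEdgeSet t)) ≤ B₂) :
    1 - (B₁ + B₂) ≤ percProb G p P := by
  rw [percProb_eq_one_sub]
  refine sub_le_sub_left ((subsetProb_sprinkle_le hp₁ hp₂ h hB₂ fun s hs hQs => ?_).trans
    (add_le_add_left hQ B₂)) 1
  have hsG : SimpleGraph.fromEdgeSet (s : Set (Sym2 V)) ≤ G :=
    (SimpleGraph.fromEdgeSet_le _).2 fun _ he => (Finset.mem_filter.1 (hs he.1)).2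
  simpa only [Finset.coe_union, SimpleGraph.fromEdgeSet_union] using hP _ hsG hQs

end PercolatedExpander

theorem linear_path_in_percolated_expander (d : ℕ) (hd : 3 ≤ d) (p : ℝ)
    (hp : 1 / ((d : ℝ) - 1) < p) (hp1 : p < 1) (b : ℝ) (hb : 0 < b) :
    ∃ δ > (0:ℝ), ∃ c > (0:ℝ), ∃ R : ℕ, 0 < R ∧
      ∀ (V : Type) [Fintype V] [DecidableEq V] (G : SimpleGraph V),
        IsRegularExpander G b d → (R : ℕ∞) < G.girth →
        1 - Real.exp (-c * Fintype.card V) ≤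
          percProb G p (fun H =>
            ∃ (u w : V) (P : H.Walk u w), P.IsPath ∧
              δ * Fintype.card V ≤ (P.length : ℝ)) := by
  obtain ⟨m, rfl⟩ : ∃ m, d = m + 1 := ⟨d - 1, by omega⟩
  have hm : (0 : ℝ) < m := by exact_mod_cast (by omega : 0 < m)
  rw [Nat.cast_add_one, add_sub_cancel_right] at hp
  obtain ⟨p₁, ⟨hmp₁, hp₁p⟩, p₂, hp₂, hpp⟩ := exists_sprinkling hp hp1
  have hp₁ : p₁ ∈ Set.Icc 0 1 := ⟨(one_div_pos.2 hm).le.trans hmp₁.le, (hp₁p.trans hp1).le⟩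
  obtain ⟨θ, hθ, hclusters⟩ :=
    exists_subsetProb_card_bigVerts_le_le_exp hp₁ ((div_lt_iff₀ hm).1 hmp₁)
  obtain ⟨K, hK, δ, hδ, c₂, hc₂, N₂, hpath⟩ :=
    exists_subsetProb_not_hasPath_sup_le hb hp₂ hθ (m + 1)
  obtain ⟨c₁, hc₁, hbig⟩ := hclusters K hK
  obtain ⟨c, hc, N, hN⟩ := exists_exp_add_exp_le hc₁ hc₂
  refine ⟨δ, hδ, c, hc, max K ⌈max N₂ N⌉₊, by omega, fun V _ _ G hG hR => ?_⟩
  rw [Nat.cast_lt, max_lt_iff] at hR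
  have hgirth : (K : ℕ∞) < G.egirth :=
    (Nat.cast_lt.2 hR.1).trans_le (ENat.natCast_toNat_le_self _)
  have hn : max N₂ N ≤ Fintype.card V := Nat.ceil_le.1 (hR.2.le.trans (girth_le_card G))
  refine (sub_le_sub_left (hN _ ((le_max_right N₂ N).trans hn)) 1).trans ?_
  refine le_percProb_of_sprinkle (Q := fun H => θ * Fintype.card V < (bigVerts H K).card)
    hp₁ (Set.Ioc_subset_Icc_self hp₂) hpp (Real.exp_nonneg _) ?_ fun H hHG hH => ?_
  · simpa only [not_lt] using hbig V G hG.isRegularOfDegree hgirth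
  · exact hpath V G H hG.1 hHG hH.le ((le_max_left N₂ N).trans hn)

end Percolation

end
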